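/- Let η, ε : F ⊣ U : B → A be an adjunction, G = (FU, ε, FηU) the induced comonad on B, and b₀ an object of B. For every monomorphism i_a : a → U(b₀) such that ξ_{i_a} = ε_{b₀} ∘ F(i_a) : F(a) → b₀ is an isomorphism, the composite FU(ξ_{i_a}) ∘ F(η_a) ∘ ξ_{i_a}^{-1} : b₀ → FU(b₀) equips b₀ with the structure of a G-coalgebra (it satisfies the counit and coassociativity axioms); moreover this coalgebra structure depends only on the subobject class of i_a. Hence the assignment [(a, i_a)] ↦ FU(ξ_{i_a}) ∘ F(η_a) ∘ ξ_{i_a}^{-1} defines a map Ψ_{F,b₀} : Sub_{A,F}(U(b₀)) → G-coalg(b₀). -/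

import Mathlib

open CategoryTheory

/-- Given an adjunction `F ⊣ U`, an object `b₀` and a morphism `i : a ⟶ U(b₀)` such that
`ξ_i := ε_{b₀} ∘ F(i)` is invertible, this is the morphism
`Ψ(i) = FU(ξ_i) ∘ F(η_a) ∘ ξ_i⁻¹ : b₀ ⟶ FU(b₀)`. -/
noncomputable def coalgStr {A : Type*} {B : Type*} [Category A] [Category B]
    (F : A ⥤ B) (U : B ⥤ A) (adj : F ⊣ U) {b₀ : B} {a : A}
    (i : a ⟶ U.obj b₀) (h : IsIso (F.map i ≫ adj.counit.app b₀)) :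
    b₀ ⟶ F.obj (U.obj b₀) :=
  letI := h
  inv (F.map i ≫ adj.counit.app b₀) ≫ F.map (adj.unit.app a) ≫
    F.map (U.map (F.map i ≫ adj.counit.app b₀))

/-!
Write `ξ = F(i) ≫ ε`. The structure `θ = Ψ(i)` is determined by the equation `ξ ≫ θ = F(i)`, since
`η ≫ U(ξ) = i`. Cancelling `ξ`, the counit axiom becomes the definition of `ξ`. The equation
transposes to `i ≫ U(θ) = i ≫ η`, whose image under `F` is coassociativity precomposed with `ξ`.
Finally, if `e ≫ i = i'` then `ξ' = F(e) ≫ ξ`, so `Ψ(i)` satisfies the equation determining `Ψ(i')`.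
-/

section

variable {A : Type*} {B : Type*} [Category A] [Category B] {F : A ⥤ B} {U : B ⥤ A}
  (adj : F ⊣ U) {a : A} {b : B}

theorem unit_comp_map_map_comp_counit (i : a ⟶ U.obj b) :
    adj.unit.app a ≫ U.map (F.map i ≫ adj.counit.app b) = i :=
  (adj.unit_comp_map_eq_iff _ _).2 rfl

theorem map_comp_counit_comp_eq_map_iff {i : a ⟶ U.obj b} {θ : b ⟶ F.obj (U.obj b)} :
    (F.map i ≫ adj.counit.app b) ≫ θ = F.map i ↔
      i ≫ U.map θ = i ≫ adj.unit.app (U.obj b) := by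
  have transpose_left :
      adj.homEquiv _ _ ((F.map i ≫ adj.counit.app b) ≫ θ) = i ≫ U.map θ := by
    rw [adj.homEquiv_naturality_right, adj.homEquiv_unit]
    exact congrArg (· ≫ U.map θ) (unit_comp_map_map_comp_counit adj i)
  have transpose_right : adj.homEquiv _ _ (F.map i) = i ≫ adj.unit.app (U.obj b) := by
    rw [adj.homEquiv_unit, adj.unit_naturality]
  rw [← (adj.homEquiv _ _).apply_eq_iff_eq, transpose_left, transpose_right]

theorem comp_counit_eq_id_of_map_comp_counit_comp_eq_map
    {i : a ⟶ U.obj b} [Epi (F.map i ≫ adj.counit.app b)] {θ : b ⟶ F.obj (U.obj b)}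
    (hθ : (F.map i ≫ adj.counit.app b) ≫ θ = F.map i) :
    θ ≫ adj.counit.app b = 𝟙 b := by
  rw [← cancel_epi (F.map i ≫ adj.counit.app b), ← Category.assoc, hθ]
  exact (Category.comp_id _).symm

theorem comp_map_unit_eq_of_map_comp_counit_comp_eq_map
    {i : a ⟶ U.obj b} [Epi (F.map i ≫ adj.counit.app b)] {θ : b ⟶ F.obj (U.obj b)}
    (hθ : (F.map i ≫ adj.counit.app b) ≫ θ = F.map i) :
    θ ≫ F.map (adj.unit.app (U.obj b)) = θ ≫ F.map (U.map θ) := by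
  have equalizes : i ≫ U.map θ = i ≫ adj.unit.app (U.obj b) :=
    (map_comp_counit_comp_eq_map_iff adj).1 hθ
  rw [← cancel_epi (F.map i ≫ adj.counit.app b), ← Category.assoc, ← Category.assoc, hθ,
    ← F.map_comp, ← F.map_comp, equalizes]

theorem eq_coalgStr_iff (i : a ⟶ U.obj b) (h : IsIso (F.map i ≫ adj.counit.app b))
    {θ : b ⟶ F.obj (U.obj b)} :
    θ = coalgStr F U adj i h ↔ (F.map i ≫ adj.counit.app b) ≫ θ = F.map i := by
  rw [coalgStr, ← F.map_comp, unit_comp_map_map_comp_counit, IsIso.eq_inv_comp]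

theorem map_comp_counit_comp_coalgStr (i : a ⟶ U.obj b)
    (h : IsIso (F.map i ≫ adj.counit.app b)) :
    (F.map i ≫ adj.counit.app b) ≫ coalgStr F U adj i h = F.map i :=
  (eq_coalgStr_iff adj i h).1 rfl

theorem coalgStr_eq_of_comp_eq {i : a ⟶ U.obj b} (h : IsIso (F.map i ≫ adj.counit.app b))
    {a' : A} {i' : a' ⟶ U.obj b} (h' : IsIso (F.map i' ≫ adj.counit.app b))
    (e : a' ⟶ a) (w : e ≫ i = i') :
    coalgStr F U adj i' h' = coalgStr F U adj i h := by
  symm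
  rw [eq_coalgStr_iff]
  calc (F.map i' ≫ adj.counit.app b) ≫ coalgStr F U adj i h
      = F.map e ≫ (F.map i ≫ adj.counit.app b) ≫ coalgStr F U adj i h := by
        simp only [← w, F.map_comp, Category.assoc]
    _ = F.map e ≫ F.map i := by rw [map_comp_counit_comp_coalgStr]
    _ = F.map i' := by rw [← F.map_comp, w]

end

theorem stmt_5_general {A : Type*} {B : Type*} [Category A] [Category B]
    {F : A ⥤ B} {U : B ⥤ A} (adj : F ⊣ U) (b₀ : B) {a : A}
    (i : a ⟶ U.obj b₀) (h : IsIso (F.map i ≫ adj.counit.app b₀)) :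
    coalgStr F U adj i h ≫ adj.counit.app b₀ = 𝟙 b₀ ∧
    coalgStr F U adj i h ≫ F.map (adj.unit.app (U.obj b₀)) =
      coalgStr F U adj i h ≫ F.map (U.map (coalgStr F U adj i h)) ∧
    (∀ {a' : A} (i' : a' ⟶ U.obj b₀)
        (h' : IsIso (F.map i' ≫ adj.counit.app b₀)) (e : a' ⟶ a),
      e ≫ i = i' → coalgStr F U adj i' h' = coalgStr F U adj i h) :=
  have hθ := map_comp_counit_comp_coalgStr adj i h
  ⟨comp_counit_eq_id_of_map_comp_counit_comp_eq_map adj hθ,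
    comp_map_unit_eq_of_map_comp_counit_comp_eq_map adj hθ,
    fun _ h' e w => coalgStr_eq_of_comp_eq adj h h' e w⟩

/-- Let `η, ε : F ⊣ U : B → A` be an adjunction, `G = (FU, ε, FηU)` the
induced comonad on `B`, and `b₀ ∈ B`.  For every monomorphism `i : a ⟶ U(b₀)` such that
`ξ_i = ε_{b₀} ∘ F(i) : F(a) ⟶ b₀` is an isomorphism, the composite
`Ψ(i) = FU(ξ_i) ∘ F(η_a) ∘ ξ_i⁻¹ : b₀ ⟶ FU(b₀)` equips `b₀` with the structure of a
`G`-coalgebra (counit and coassociativity axioms hold), and this coalgebra structure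
depends only on the subobject class of `i`.  Hence `[(a,i)] ↦ Ψ(i)` defines a map
`Ψ_{F,b₀} : Sub_{A,F}(U(b₀)) → G-coalg(b₀)`. -/
theorem stmt_5 {A : Type*} {B : Type*} [Category A] [Category B]
    {F : A ⥤ B} {U : B ⥤ A} (adj : F ⊣ U) (b₀ : B) {a : A}
    (i : a ⟶ U.obj b₀) [Mono i]
    (h : IsIso (F.map i ≫ adj.counit.app b₀)) :
    coalgStr F U adj i h ≫ adj.counit.app b₀ = 𝟙 b₀ ∧
    coalgStr F U adj i h ≫ F.map (adj.unit.app (U.obj b₀)) =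
      coalgStr F U adj i h ≫ F.map (U.map (coalgStr F U adj i h)) ∧
    (∀ {a' : A} (i' : a' ⟶ U.obj b₀) [Mono i']
        (h' : IsIso (F.map i' ≫ adj.counit.app b₀)) (e : a' ≅ a),
      e.hom ≫ i = i' → coalgStr F U adj i' h' = coalgStr F U adj i h) := by
  obtain ⟨counit, coassoc, invariance⟩ := stmt_5_general adj b₀ i h
  exact ⟨counit, coassoc, fun i' _ h' e w => invariance i' h' e.hom w⟩
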